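/- Unconditional energy dissipation of the first-order structure-preserving IVS scheme (Theorem 3.2): let τ, M, λ, ν, ε, δ₀ > 0, β ≥ 0, and γⁿ, Rⁿ, R^{n+1} ∈ ℝ. Let φⁿ, φ^{n+1}, μⁿ, μ^{n+1}, pⁿ, p^{n+1} : ℝ^d → ℝ and uⁿ, û^{n+1}, u^{n+1} : ℝ^d → ℝ^d all be C². Assume E₁(φⁿ) + δ₀ > 0 and set ξ^{n+1} = R^{n+1}/√(E₁(φⁿ) + δ₀). Assume, pointwise on Ω: (i) (φ^{n+1} − φⁿ)/τ + ξ^{n+1}∇·(uⁿφⁿ) = MΔμ^{n+1}; (ii) μ^{n+1} = −λΔφ^{n+1} + λβφ^{n+1} + λξ^{n+1}F′(φⁿ); (iii) (û^{n+1} − uⁿ)/τ + ξ^{n+1} uⁿ·∇uⁿ − νΔû^{n+1} = −ξ^{n+1}(φⁿ∇μⁿ + γⁿ∇pⁿ); (iv) (u^{n+1} − û^{n+1})/τ − νΔ(u^{n+1} − û^{n+1}) + ∇p^{n+1} = γⁿ∇pⁿ; (v) ∇·u^{n+1} = 0; together with the boundary conditions ∂ₙφ^{n+1} = ∂ₙμ^{n+1}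 = 0 on ∂Ω and û^{n+1} = u^{n+1} = 0 on ∂Ω, and the scalar relation (R^{n+1} − Rⁿ)/τ = [λ(F′(φⁿ), (φ^{n+1} − φⁿ)/τ) + (μ^{n+1}, ∇·(uⁿφⁿ)) + (û^{n+1}, φⁿ∇μⁿ) + b(uⁿ, uⁿ, û^{n+1}) + γⁿ(∇pⁿ, û^{n+1})] / (2λ√(E₁(φⁿ) + δ₀)). Define Eⁿ = ½‖uⁿ‖² + (λ/2)‖∇φⁿ‖² + (λβ/2)‖φⁿ‖² + λ(Rⁿ)² and E^{n+1} = ½‖u^{n+1}‖² + (λ/2)‖∇φ^{n+1}‖² + (λβ/2)‖φ^{n+1}‖² + λ(R^{n+1})². Then E^{n+1} − Eⁿ ≤ −Mτ‖∇μ^{n+1}‖² − (ντ/2)(‖∇û^{n+1}‖² + ‖∇u^{n+1}‖²). -/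

import Mathlib

open MeasureTheory Finset

noncomputable section

/-- Partial derivative of `f` in coordinate direction `i`. -/
def pd {d : ℕ} (i : Fin d) (f : (Fin d → ℝ) → ℝ) (x : Fin d → ℝ) : ℝ :=
  fderiv ℝ f x (Pi.single i 1)

/-- Divergence of a vector field. -/
def vdiv {d : ℕ} (u : (Fin d → ℝ) → Fin d → ℝ) (x : Fin d → ℝ) : ℝ :=
  ∑ i, pd i (fun y => u y i) x

/-- Laplacian. -/
def lap {d : ℕ} (f : (Fin d → ℝ) → ℝ) (x : Fin d → ℝ) : ℝ :=
  ∑ i, pd i (pd i f) x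

/-- Convection term `(u·∇)v`, component `i`. -/
def convect {d : ℕ} (u v : (Fin d → ℝ) → Fin d → ℝ) (x : Fin d → ℝ) (i : Fin d) : ℝ :=
  ∑ j, u x j * pd j (fun y => v y i) x

/-- Trilinear form `b(u,v,w) = ∫_Ω (u·∇v)·w dx`. -/
def trib {d : ℕ} (Ω : Set (Fin d → ℝ)) (u v w : (Fin d → ℝ) → Fin d → ℝ) : ℝ :=
  ∫ x in Ω, ∑ i, convect u v x i * w x i

/-- Homogeneous Neumann boundary condition on the box `[a,b]`. -/
def neumannBC {d : ℕ} (a b : Fin d → ℝ) (f : (Fin d → ℝ) → ℝ) : Prop :=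
  ∀ i : Fin d, ∀ x ∈ Set.Icc a b, (x i = a i ∨ x i = b i) → pd i f x = 0

/-- `F(s) = G(s) - (β/2)s²` with `G(s) = (1-s²)²/(4ε²)` the Ginzburg–Landau potential. -/
def Ffun (ε β s : ℝ) : ℝ := (1 - s^2)^2 / (4 * ε^2) - (β / 2) * s^2

/-- `F′(s) = (s³ - s)/ε² - βs`. -/
def Fprime (ε β s : ℝ) : ℝ := (s^3 - s) / ε^2 - β * s

/-- `E₁(φ) = ∫_Ω F(φ) dx`. -/
def E1 {d : ℕ} (Ω : Set (Fin d → ℝ)) (ε β : ℝ) (φ : (Fin d → ℝ) → ℝ) : ℝ :=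
  ∫ x in Ω, Ffun ε β (φ x)

/-! Writing `x¹` for the value of `x` at the new time level, test the prediction step with `û`, the
correction step with `u¹`, and the phase equation with `μ¹`. Integration by parts turns every
diffusion term into a Dirichlet form, the pressures vanish because `u¹` is solenoidal, and
`|x|² - |y|² ≤ 2 x · (x - y)` produces the differences of energies. What is left is `ξ` times the
explicit coupling terms. The equation for the auxiliary variable is designed so that
`λ(R¹)² - λR²` absorbs exactly these, which is why no restriction on the time step appears. -/

section PartialDerivatives

variable {d : ℕ} {f g : (Fin d → ℝ) → ℝ} {x : Fin d → ℝ}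

theorem contDiff_pd {m n : WithTop ℕ∞} (hf : ContDiff ℝ n f) (hmn : m + 1 ≤ n) (i : Fin d) :
    ContDiff ℝ m (pd i f) :=
  (hf.fderiv_right hmn).clm_apply contDiff_const

theorem continuous_pd (hf : ContDiff ℝ 1 f) (i : Fin d) : Continuous (pd i f) :=
  (contDiff_pd (m := 0) hf (by norm_num) i).continuous

theorem continuous_vdiv {u : (Fin d → ℝ) → Fin d → ℝ} (hu : ContDiff ℝ 1 u) :
    Continuous (vdiv u) :=
  continuous_finsetSum _ fun i _ => continuous_pd (contDiff_pi.1 hu i) i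

theorem continuous_lap (hf : ContDiff ℝ 2 f) : Continuous (lap f) :=
  continuous_finsetSum _ fun i _ => continuous_pd (contDiff_pd hf (by norm_num) i) i

theorem continuous_convect {u v : (Fin d → ℝ) → Fin d → ℝ} (hu : Continuous u)
    (hv : ContDiff ℝ 1 v) : Continuous (convect u v) :=
  continuous_pi fun i => continuous_finsetSum _ fun j _ =>
    ((continuous_apply j).comp hu).mul (continuous_pd (contDiff_pi.1 hv i) j)

theorem pd_sub (hf : DifferentiableAt ℝ f x) (hg : DifferentiableAt ℝ g x) (i : Fin d) :
    pd i (fun y => f y - g y) x = pd i f x - pd i g x := by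
  simp only [pd, fderiv_fun_sub hf hg, sub_apply]

theorem pd_const_mul (hf : DifferentiableAt ℝ f x) (c : ℝ) (i : Fin d) :
    pd i (fun y => c * f y) x = c * pd i f x := by
  simp only [pd, fderiv_const_mul hf, smul_apply, smul_eq_mul]

theorem pd_mul (hf : DifferentiableAt ℝ f x) (hg : DifferentiableAt ℝ g x) (i : Fin d) :
    pd i (fun y => f y * g y) x = f x * pd i g x + g x * pd i f x := by
  simp only [pd, fderiv_fun_mul hf hg, add_apply, smul_apply, smul_eq_mul]

theorem vdiv_mul {u : (Fin d → ℝ) → Fin d → ℝ} (hf : DifferentiableAt ℝ f x)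
    (hu : DifferentiableAt ℝ u x) :
    vdiv (fun y i => f y * u y i) x = f x * vdiv u x + ∑ i, pd i f x * u x i := by
  simp only [vdiv, pd_mul hf (differentiableAt_pi.1 hu _), mul_sum, sum_add_distrib,
    mul_comm (u x _)]

end PartialDerivatives

section IntegrationByParts

variable {d : ℕ} {a b : Fin d → ℝ}

/-- The normal component of the vector field `u` vanishes on every face of the box `[a, b]`.
For `u = ∇f` this is `neumannBC a b f`. -/
def NormalTraceZero (a b : Fin d → ℝ) (u : (Fin d → ℝ) → Fin d → ℝ) : Prop :=
  ∀ i, ∀ x ∈ Set.Icc a b, (x i = a i ∨ x i = b i) → u x i = 0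

theorem NormalTraceZero.mul_left {u : (Fin d → ℝ) → Fin d → ℝ} (hu : NormalTraceZero a b u)
    (f : (Fin d → ℝ) → ℝ) : NormalTraceZero a b fun x i => f x * u x i :=
  fun i x hx hface => mul_eq_zero_of_right _ (hu i x hx hface)

theorem mem_frontier_Icc_of_face {x : Fin d → ℝ} {i : Fin d} (hx : x ∈ Set.Icc a b)
    (hface : x i = a i ∨ x i = b i) : x ∈ frontier (Set.Icc a b) := by
  refine ⟨subset_closure hx, fun hint => ?_⟩
  rw [← Set.pi_univ_Icc, interior_pi_set Set.finite_univ] at hint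
  have hi : x i ∈ Set.Ioo (a i) (b i) := by simpa only [interior_Icc] using hint i trivial
  exact hface.elim hi.1.ne' hi.2.ne

theorem normalTraceZero_of_frontier {u : (Fin d → ℝ) → Fin d → ℝ}
    (hu : ∀ x ∈ frontier (Set.Icc a b), u x = 0) : NormalTraceZero a b u :=
  fun i x hx hface => congrFun (hu x (mem_frontier_Icc_of_face hx hface)) i

theorem integral_vdiv_eq_zero {u : (Fin d → ℝ) → Fin d → ℝ} (hu : ContDiff ℝ 1 u)
    (hu₀ : NormalTraceZero a b u) : ∫ x in Set.Icc a b, vdiv u x = 0 := by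
  by_cases hab : a ≤ b
  swap
  · rw [Set.Icc_eq_empty hab, setIntegral_empty]
  cases d with
  | zero => simp only [vdiv, univ_eq_empty, sum_empty, integral_zero]
  | succ n =>
    have hu' := contDiff_pi.1 hu
    have hflux := integral_divergence_of_hasFDerivAt_off_countable' a b hab
      (fun i x => u x i) (fun i => fderiv ℝ fun x => u x i) ∅ Set.countable_empty
      (fun i => (hu' i).continuous.continuousOn)
      (fun x _ i => ((hu' i).differentiable one_ne_zero x).hasFDerivAt)
      (continuous_vdiv hu).integrableOn_Icc
    refine hflux.trans (sum_eq_zero fun i _ => ?_)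
    have hface : ∀ c ∈ Set.Icc (a i) (b i), (c = a i ∨ c = b i) →
        ∀ y ∈ Set.Icc (a ∘ i.succAbove) (b ∘ i.succAbove), u (i.insertNth c y) i = 0 :=
      fun c hc hc' y hy => hu₀ i _ (Fin.insertNth_mem_Icc.2 ⟨hc, hy⟩) (by simpa using hc')
    rw [setIntegral_eq_zero_of_forall_eq_zero
        (hface (b i) (Set.right_mem_Icc.2 (hab i)) (.inr rfl)),
      setIntegral_eq_zero_of_forall_eq_zero
        (hface (a i) (Set.left_mem_Icc.2 (hab i)) (.inl rfl)), sub_zero]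

theorem integral_mul_vdiv {f : (Fin d → ℝ) → ℝ} {u : (Fin d → ℝ) → Fin d → ℝ}
    (hf : ContDiff ℝ 1 f) (hu : ContDiff ℝ 1 u)
    (hfu : NormalTraceZero a b fun x i => f x * u x i) :
    ∫ x in Set.Icc a b, f x * vdiv u x = -∫ x in Set.Icc a b, ∑ i, pd i f x * u x i := by
  have hu' := contDiff_pi.1 hu
  have hflux := integral_vdiv_eq_zero (contDiff_pi.2 fun i => hf.mul (hu' i)) hfu
  have hcf := hf.continuous
  have hcu := hu.continuous
  have hgf := continuous_pd hf
  have hcdiv := continuous_vdiv hu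
  simp only [vdiv_mul (hf.differentiable one_ne_zero _) (hu.differentiable one_ne_zero _)] at hflux
  rw [integral_add (Continuous.integrableOn_Icc (by fun_prop))
    (Continuous.integrableOn_Icc (by fun_prop))] at hflux
  exact eq_neg_of_add_eq_zero_left hflux

theorem integral_mul_lap {f g : (Fin d → ℝ) → ℝ} (hf : ContDiff ℝ 1 f) (hg : ContDiff ℝ 2 g)
    (hfg : NormalTraceZero a b fun x i => f x * pd i g x) :
    ∫ x in Set.Icc a b, f x * lap g x = -∫ x in Set.Icc a b, ∑ i, pd i f x * pd i g x :=
  integral_mul_vdiv hf (contDiff_pi.2 (contDiff_pd hg (by norm_num))) hfg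

theorem integral_pd_mul_eq_zero {p : (Fin d → ℝ) → ℝ} {u : (Fin d → ℝ) → Fin d → ℝ}
    (hp : ContDiff ℝ 1 p) (hu : ContDiff ℝ 1 u) (hu₀ : NormalTraceZero a b u)
    (hdiv : ∀ x ∈ Set.Icc a b, vdiv u x = 0) :
    ∫ x in Set.Icc a b, ∑ i, pd i p x * u x i = 0 := by
  rw [← neg_eq_zero, ← integral_mul_vdiv hp hu (hu₀.mul_left p)]
  exact setIntegral_eq_zero_of_forall_eq_zero fun x hx => mul_eq_zero_of_right _ (hdiv x hx)

end IntegrationByParts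

section ImplicitSteps

variable {d : ℕ} {a b : Fin d → ℝ}

theorem setIntegral_Icc_sum {ι : Type*} [Fintype ι] {F : ι → (Fin d → ℝ) → ℝ}
    (hF : ∀ i, Continuous (F i)) :
    ∫ x in Set.Icc a b, ∑ i, F i x = ∑ i, ∫ x in Set.Icc a b, F i x :=
  integral_finsetSum _ fun i _ => (hF i).integrableOn_Icc

theorem setIntegral_sum_sq_sub_le {ι : Type*} [Fintype ι] {f g : ι → (Fin d → ℝ) → ℝ}
    (hf : ∀ i, Continuous (f i)) (hg : ∀ i, Continuous (g i)) :
    (∫ x in Set.Icc a b, ∑ i, f i x ^ 2) - ∫ x in Set.Icc a b, ∑ i, g i x ^ 2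
      ≤ 2 * ∫ x in Set.Icc a b, ∑ i, f i x * (f i x - g i x) := by
  rw [← integral_sub (Continuous.integrableOn_Icc (by fun_prop))
    (Continuous.integrableOn_Icc (by fun_prop)), ← integral_const_mul]
  refine setIntegral_mono (Continuous.integrableOn_Icc (by fun_prop))
    (Continuous.integrableOn_Icc (by fun_prop)) fun x => ?_
  simp only [← sum_sub_distrib, mul_sum]
  exact sum_le_sum fun i _ => by linarith [sq_nonneg (f i x - g i x)]

theorem setIntegral_sq_sub_le {f g : (Fin d → ℝ) → ℝ} (hf : Continuous f) (hg : Continuous g) :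
    (∫ x in Set.Icc a b, f x ^ 2) - ∫ x in Set.Icc a b, g x ^ 2
      ≤ 2 * ∫ x in Set.Icc a b, f x * (f x - g x) := by
  simpa only [univ_unique, sum_const, card_singleton, one_smul] using
    setIntegral_sum_sq_sub_le (ι := Unit) (fun _ => hf) (fun _ => hg)

theorem dirichletEnergy_sub_le {f g : (Fin d → ℝ) → ℝ} (hf : ContDiff ℝ 1 f)
    (hg : ContDiff ℝ 1 g) :
    (∫ x in Set.Icc a b, ∑ i, pd i f x ^ 2) - ∫ x in Set.Icc a b, ∑ i, pd i g x ^ 2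
      ≤ 2 * ∫ x in Set.Icc a b, ∑ i, pd i f x * pd i (fun y => f y - g y) x := by
  simpa only [pd_sub (hf.differentiable one_ne_zero _) (hg.differentiable one_ne_zero _)] using
    setIntegral_sum_sq_sub_le (continuous_pd hf) (continuous_pd hg)

variable {τ κ ν : ℝ}

theorem weakForm_of_diffusionStep {v w z f ψ : (Fin d → ℝ) → ℝ} (hτ : τ ≠ 0)
    (hv : Continuous v) (hw : Continuous w) (hz : ContDiff ℝ 2 z) (hψ : ContDiff ℝ 1 ψ)
    (hbc : NormalTraceZero a b fun x i => ψ x * pd i z x)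
    (hstep : ∀ x ∈ Set.Icc a b, (w x - v x) / τ - κ * lap z x = f x) :
    (∫ x in Set.Icc a b, ψ x * (w x - v x))
      + τ * κ * ∫ x in Set.Icc a b, ∑ i, pd i ψ x * pd i z x
      = τ * ∫ x in Set.Icc a b, f x * ψ x := by
  have hψ' := hψ.continuous
  have hlap := continuous_lap hz
  calc _ = (∫ x in Set.Icc a b, ψ x * (w x - v x))
        - τ * κ * ∫ x in Set.Icc a b, ψ x * lap z x := by
        rw [integral_mul_lap hψ hz hbc, mul_neg, sub_neg_eq_add]
    _ = ∫ x in Set.Icc a b, ψ x * (w x - v x) - τ * κ * (ψ x * lap z x) := by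
        rw [integral_sub (Continuous.integrableOn_Icc (by fun_prop))
          (Continuous.integrableOn_Icc (by fun_prop)), integral_const_mul]
    _ = _ := by
        rw [← integral_const_mul]
        refine setIntegral_congr_fun measurableSet_Icc fun x hx => ?_
        simp only [← hstep x hx]
        field_simp

theorem implicitStep_energy_le {v w f : (Fin d → ℝ) → ℝ} (hτ : τ ≠ 0)
    (hv : Continuous v) (hw : ContDiff ℝ 2 w)
    (hw₀ : ∀ x ∈ frontier (Set.Icc a b), w x = 0)
    (hstep : ∀ x ∈ Set.Icc a b, (w x - v x) / τ - ν * lap w x = f x) :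
    1 / 2 * (∫ x in Set.Icc a b, w x ^ 2)
      + ν * τ * (∫ x in Set.Icc a b, ∑ i, pd i w x ^ 2)
      ≤ 1 / 2 * (∫ x in Set.Icc a b, v x ^ 2) + τ * ∫ x in Set.Icc a b, f x * w x := by
  have hweak := weakForm_of_diffusionStep hτ hv hw.continuous hw (hw.of_le one_le_two)
    (normalTraceZero_of_frontier fun x hx => by ext i; simp [hw₀ x hx]) hstep
  simp only [← sq] at hweak
  linarith [setIntegral_sq_sub_le (a := a) (b := b) hw.continuous hv]

theorem correctionStep_energy_le {v w f : (Fin d → ℝ) → ℝ} (hτ : 0 < τ) (hν : 0 ≤ ν)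
    (hv : ContDiff ℝ 2 v) (hw : ContDiff ℝ 2 w)
    (hw₀ : ∀ x ∈ frontier (Set.Icc a b), w x = 0)
    (hstep : ∀ x ∈ Set.Icc a b, (w x - v x) / τ - ν * lap (fun y => w y - v y) x = f x) :
    1 / 2 * (∫ x in Set.Icc a b, w x ^ 2)
      + ν * τ / 2 * (∫ x in Set.Icc a b, ∑ i, pd i w x ^ 2)
      ≤ 1 / 2 * (∫ x in Set.Icc a b, v x ^ 2)
        + ν * τ / 2 * (∫ x in Set.Icc a b, ∑ i, pd i v x ^ 2)
        + τ * ∫ x in Set.Icc a b, f x * w x := by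
  have hw₁ := hw.of_le one_le_two
  have hweak := weakForm_of_diffusionStep hτ.ne' hv.continuous hw.continuous (hw.sub hv) hw₁
    (normalTraceZero_of_frontier fun x hx => by ext i; simp [hw₀ x hx]) hstep
  have hgrad := mul_le_mul_of_nonneg_left
    (dirichletEnergy_sub_le (a := a) (b := b) hw₁ (hv.of_le one_le_two)) (mul_nonneg hν hτ.le)
  linarith [setIntegral_sq_sub_le (a := a) (b := b) hw.continuous hv.continuous]

end ImplicitSteps

section SchemeEnergy

variable {d : ℕ} {a b : Fin d → ℝ} {τ ν : ℝ}

theorem predictionCorrection_energy_le {u uhat w f : (Fin d → ℝ) → Fin d → ℝ}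
    {q : (Fin d → ℝ) → ℝ} (hτ : 0 < τ) (hν : 0 ≤ ν)
    (hu : Continuous u) (huhat : ContDiff ℝ 2 uhat) (hw : ContDiff ℝ 2 w)
    (hf : Continuous f) (hq : ContDiff ℝ 1 q)
    (huhat₀ : ∀ x ∈ frontier (Set.Icc a b), uhat x = 0)
    (hw₀ : ∀ x ∈ frontier (Set.Icc a b), w x = 0)
    (hpred : ∀ x ∈ Set.Icc a b, ∀ i,
      (uhat x i - u x i) / τ - ν * lap (fun y => uhat y i) x = f x i)
    (hcorr : ∀ x ∈ Set.Icc a b, ∀ i,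
      (w x i - uhat x i) / τ - ν * lap (fun y => w y i - uhat y i) x = pd i q x)
    (hdiv : ∀ x ∈ Set.Icc a b, vdiv w x = 0) :
    1 / 2 * (∫ x in Set.Icc a b, ∑ i, w x i ^ 2)
      + ν * τ / 2 * ((∫ x in Set.Icc a b, ∑ i, ∑ j, pd j (fun y => uhat y i) x ^ 2)
        + ∫ x in Set.Icc a b, ∑ i, ∑ j, pd j (fun y => w y i) x ^ 2)
      ≤ 1 / 2 * (∫ x in Set.Icc a b, ∑ i, u x i ^ 2)
        + τ * ∫ x in Set.Icc a b, ∑ i, f x i * uhat x i := by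
  have huhat' := contDiff_pi.1 huhat
  have hw' := contDiff_pi.1 hw
  have hcu := fun i => (huhat' i).continuous
  have hcw := fun i => (hw' i).continuous
  have hgu := fun i => continuous_pd ((huhat' i).of_le one_le_two)
  have hgw := fun i => continuous_pd ((hw' i).of_le one_le_two)
  have hgq := continuous_pd hq
  have hcomponent := sum_le_sum fun i (_ : i ∈ univ) => add_le_add
    (implicitStep_energy_le hτ.ne' (continuous_pi_iff.1 hu i) (huhat' i)
      (fun x hx => congrFun (huhat₀ x hx) i) fun x hx => hpred x hx i)
    (correctionStep_energy_le hτ hν (huhat' i) (hw' i)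
      (fun x hx => congrFun (hw₀ x hx) i) fun x hx => hcorr x hx i)
  have hpressure := integral_pd_mul_eq_zero hq (hw.of_le one_le_two)
    (normalTraceZero_of_frontier hw₀) hdiv
  simp only [sum_add_distrib, ← mul_sum] at hcomponent
  rw [← setIntegral_Icc_sum (by fun_prop), ← setIntegral_Icc_sum (by fun_prop),
    ← setIntegral_Icc_sum (by fun_prop), ← setIntegral_Icc_sum (by fun_prop),
    ← setIntegral_Icc_sum (by fun_prop), ← setIntegral_Icc_sum (by fun_prop),
    ← setIntegral_Icc_sum (by fun_prop), hpressure] at hcomponent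
  linarith

theorem integral_couplingForce_mul {ξ γ : ℝ} {φ μ p : (Fin d → ℝ) → ℝ}
    {u v : (Fin d → ℝ) → Fin d → ℝ} (hφ : Continuous φ) (hμ : ContDiff ℝ 1 μ)
    (hp : ContDiff ℝ 1 p) (hu : ContDiff ℝ 1 u) (hv : Continuous v) :
    ∫ x in Set.Icc a b, ∑ i, -ξ * (convect u u x i + φ x * pd i μ x + γ * pd i p x) * v x i
      = -ξ * (trib (Set.Icc a b) u u v
        + (∫ x in Set.Icc a b, ∑ i, v x i * (φ x * pd i μ x))
        + γ * ∫ x in Set.Icc a b, ∑ i, pd i p x * v x i) := by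
  have hconv := continuous_convect hu.continuous hu
  have hgμ := continuous_pd hμ
  have hgp := continuous_pd hp
  rw [trib, ← integral_const_mul, ← integral_add (Continuous.integrableOn_Icc (by fun_prop))
    (Continuous.integrableOn_Icc (by fun_prop)), ← integral_add
    (Continuous.integrableOn_Icc (by fun_prop)) (Continuous.integrableOn_Icc (by fun_prop)),
    ← integral_const_mul]
  congr 1 with x
  simp only [mul_sum, ← sum_add_distrib]
  exact sum_congr rfl fun i _ => by ring

theorem coupledVelocityStep_energy_le {ξ γ : ℝ} {φ μ p p' : (Fin d → ℝ) → ℝ}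
    {u uhat w : (Fin d → ℝ) → Fin d → ℝ} (hτ : 0 < τ) (hν : 0 ≤ ν)
    (hφ : Continuous φ) (hμ : ContDiff ℝ 1 μ) (hp : ContDiff ℝ 1 p) (hp' : ContDiff ℝ 1 p')
    (hu : ContDiff ℝ 1 u) (huhat : ContDiff ℝ 2 uhat) (hw : ContDiff ℝ 2 w)
    (huhat₀ : ∀ x ∈ frontier (Set.Icc a b), uhat x = 0)
    (hw₀ : ∀ x ∈ frontier (Set.Icc a b), w x = 0)
    (hpred : ∀ x ∈ Set.Icc a b, ∀ i,
      (uhat x i - u x i) / τ + ξ * convect u u x i - ν * lap (fun y => uhat y i) x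
        = -ξ * (φ x * pd i μ x + γ * pd i p x))
    (hcorr : ∀ x ∈ Set.Icc a b, ∀ i,
      (w x i - uhat x i) / τ - ν * lap (fun y => w y i - uhat y i) x + pd i p' x
        = γ * pd i p x)
    (hdiv : ∀ x ∈ Set.Icc a b, vdiv w x = 0) :
    1 / 2 * (∫ x in Set.Icc a b, ∑ i, w x i ^ 2)
      + ν * τ / 2 * ((∫ x in Set.Icc a b, ∑ i, ∑ j, pd j (fun y => uhat y i) x ^ 2)
        + ∫ x in Set.Icc a b, ∑ i, ∑ j, pd j (fun y => w y i) x ^ 2)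
      ≤ 1 / 2 * (∫ x in Set.Icc a b, ∑ i, u x i ^ 2)
        - τ * ξ * ((∫ x in Set.Icc a b, ∑ i, uhat x i * (φ x * pd i μ x))
          + trib (Set.Icc a b) u u uhat
          + γ * ∫ x in Set.Icc a b, ∑ i, pd i p x * uhat x i) := by
  have hconv := continuous_convect hu.continuous hu
  have hgμ := continuous_pd hμ
  have hgp := continuous_pd hp
  have hdp := hp.differentiable one_ne_zero
  have hpressure : ∀ x i, pd i (fun y => γ * p y - p' y) x = γ * pd i p x - pd i p' x :=
    fun x i => by
      rw [pd_sub ((hdp x).const_mul γ) (hp'.differentiable one_ne_zero x), pd_const_mul (hdp x)]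
  have henergy := predictionCorrection_energy_le hτ hν hu.continuous huhat hw
    (f := fun x i => -ξ * (convect u u x i + φ x * pd i μ x + γ * pd i p x))
    (q := fun x => γ * p x - p' x) (by fun_prop) ((contDiff_const.mul hp).sub hp')
    huhat₀ hw₀ (fun x hx i => by linarith [hpred x hx i])
    (fun x hx i => by linarith [hcorr x hx i, hpressure x i]) hdiv
  rw [integral_couplingForce_mul hφ hμ hp hu huhat.continuous] at henergy
  linarith

variable {lam β M : ℝ}

theorem integral_sub_mul_chemicalPotential {φ ψ μ g : (Fin d → ℝ) → ℝ}
    (hφ : ContDiff ℝ 2 φ) (hψ : ContDiff ℝ 1 ψ) (hg : Continuous g) (hφ₀ : neumannBC a b φ)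
    (hμ : ∀ x ∈ Set.Icc a b, μ x = -lam * lap φ x + lam * β * φ x + g x) :
    ∫ x in Set.Icc a b, μ x * ψ x
      = lam * (∫ x in Set.Icc a b, ∑ i, pd i φ x * pd i ψ x)
        + lam * β * (∫ x in Set.Icc a b, φ x * ψ x) + ∫ x in Set.Icc a b, g x * ψ x := by
  have hcφ := hφ.continuous
  have hcψ := hψ.continuous
  have hlap := continuous_lap hφ
  have hgreen := integral_mul_lap hψ hφ (NormalTraceZero.mul_left hφ₀ ψ)
  calc _ = ∫ x in Set.Icc a b,
        -lam * (ψ x * lap φ x) + lam * β * (φ x * ψ x) + g x * ψ x :=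
        setIntegral_congr_fun measurableSet_Icc fun x hx => by simp only [hμ x hx]; ring
    _ = -lam * (∫ x in Set.Icc a b, ψ x * lap φ x)
        + lam * β * (∫ x in Set.Icc a b, φ x * ψ x) + ∫ x in Set.Icc a b, g x * ψ x := by
        rw [integral_add (Continuous.integrableOn_Icc (by fun_prop))
          (Continuous.integrableOn_Icc (by fun_prop)), integral_add
          (Continuous.integrableOn_Icc (by fun_prop))
          (Continuous.integrableOn_Icc (by fun_prop)), integral_const_mul, integral_const_mul]
    _ = _ := by rw [hgreen, neg_mul_neg]; simp only [mul_comm (pd _ ψ _)]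

theorem cahnHilliardStep_energy_le {ξ : ℝ} {φ φ' μ c g : (Fin d → ℝ) → ℝ} (hτ : τ ≠ 0)
    (hlam : 0 ≤ lam) (hβ : 0 ≤ β) (hφ : ContDiff ℝ 1 φ) (hφ' : ContDiff ℝ 2 φ')
    (hμ : ContDiff ℝ 2 μ) (hg : Continuous g)
    (hφ'₀ : neumannBC a b φ') (hμ₀ : neumannBC a b μ)
    (hstep : ∀ x ∈ Set.Icc a b, (φ' x - φ x) / τ + ξ * c x = M * lap μ x)
    (hpot : ∀ x ∈ Set.Icc a b, μ x = -lam * lap φ' x + lam * β * φ' x + lam * ξ * g x) :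
    lam / 2 * (∫ x in Set.Icc a b, ∑ i, pd i φ' x ^ 2)
      + lam * β / 2 * (∫ x in Set.Icc a b, φ' x ^ 2)
      + M * τ * (∫ x in Set.Icc a b, ∑ i, pd i μ x ^ 2)
      ≤ lam / 2 * (∫ x in Set.Icc a b, ∑ i, pd i φ x ^ 2)
        + lam * β / 2 * (∫ x in Set.Icc a b, φ x ^ 2)
        - τ * ξ * (lam * (∫ x in Set.Icc a b, g x * ((φ' x - φ x) / τ))
          + ∫ x in Set.Icc a b, μ x * c x) := by
  have hφ'₁ := hφ'.of_le one_le_two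
  have hweak := weakForm_of_diffusionStep (κ := M) (f := fun x => -ξ * c x) hτ hφ.continuous
    hφ'.continuous hμ (hμ.of_le one_le_two) (NormalTraceZero.mul_left hμ₀ μ)
    fun x hx => by linarith [hstep x hx]
  have hincrement := integral_sub_mul_chemicalPotential hφ' (hφ'₁.sub hφ)
    (hg.const_mul (lam * ξ)) hφ'₀ hpot
  have htransport : ∫ x in Set.Icc a b, -ξ * c x * μ x
      = -ξ * ∫ x in Set.Icc a b, μ x * c x := by
    simp only [mul_assoc, integral_const_mul, mul_comm (c _)]
  have hreaction : ∫ x in Set.Icc a b, lam * ξ * g x * (φ' x - φ x)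
      = τ * ξ * (lam * ∫ x in Set.Icc a b, g x * ((φ' x - φ x) / τ)) := by
    rw [← mul_assoc, ← integral_const_mul]
    exact integral_congr_ae (.of_forall fun x => by field_simp)
  have hgrad := mul_le_mul_of_nonneg_left
    (dirichletEnergy_sub_le (a := a) (b := b) hφ'₁ hφ) hlam
  have hmass := mul_le_mul_of_nonneg_left
    (setIntegral_sq_sub_le (a := a) (b := b) hφ'.continuous hφ.continuous)
    (mul_nonneg hlam hβ)
  rw [htransport] at hweak
  rw [hreaction] at hincrement
  simp only [← sq, mul_comm (μ _) (_ - _)] at hweak hincrement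
  linarith

theorem auxiliaryVariable_energy_le {R R' ξ s S : ℝ} (hτ : τ ≠ 0) (hlam : 0 < lam)
    (hs : s ≠ 0) (hξ : ξ = R' / s) (hstep : (R' - R) / τ = S / (2 * lam * s)) :
    lam * R' ^ 2 ≤ lam * R ^ 2 + τ * ξ * S := by
  have hwork : τ * ξ * S = 2 * lam * R' * (R' - R) := by
    rw [hξ]
    field_simp at hstep ⊢
    linear_combination -R' * hstep
  linarith [mul_nonneg hlam.le (sq_nonneg (R' - R))]

end SchemeEnergy

section GinzburgLandau

theorem contDiff_Ffun (ε β : ℝ) {n : WithTop ℕ∞} : ContDiff ℝ n (Ffun ε β) := by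
  unfold Ffun
  fun_prop

theorem deriv_Ffun (ε β : ℝ) : deriv (Ffun ε β) = Fprime ε β := by
  ext s
  have hsq := hasDerivAt_pow 2 s
  have hF := (((hsq.const_sub 1).pow 2).div_const (4 * ε ^ 2)).sub (hsq.const_mul (β / 2))
  refine hF.deriv.trans ?_
  simp only [Fprime]
  ring

end GinzburgLandau

theorem stmt1_general {d : ℕ} {a b : Fin d → ℝ} {τ M lam ν δ₀ β γn Rn Rn1 ξ : ℝ} {F : ℝ → ℝ}
    {φn φn1 μn μn1 pn pn1 : (Fin d → ℝ) → ℝ} {un uhat1 un1 : (Fin d → ℝ) → Fin d → ℝ}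
    (hτ : 0 < τ) (hlam : 0 < lam) (hν : 0 ≤ ν) (hβ : 0 ≤ β) (hF : ContDiff ℝ 1 F)
    (hφn : ContDiff ℝ 1 φn) (hφn1 : ContDiff ℝ 2 φn1)
    (hμn : ContDiff ℝ 1 μn) (hμn1 : ContDiff ℝ 2 μn1)
    (hpn : ContDiff ℝ 1 pn) (hpn1 : ContDiff ℝ 1 pn1)
    (hun : ContDiff ℝ 1 un) (huhat1 : ContDiff ℝ 2 uhat1) (hun1 : ContDiff ℝ 2 un1)
    (hpos : 0 < (∫ x in Set.Icc a b, F (φn x)) + δ₀)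
    (hξ : ξ = Rn1 / √((∫ x in Set.Icc a b, F (φn x)) + δ₀))
    (hphase : ∀ x ∈ Set.Icc a b,
      (φn1 x - φn x) / τ + ξ * vdiv (fun y i => un y i * φn y) x = M * lap μn1 x)
    (hpotential : ∀ x ∈ Set.Icc a b,
      μn1 x = -lam * lap φn1 x + lam * β * φn1 x + lam * ξ * deriv F (φn x))
    (hprediction : ∀ x ∈ Set.Icc a b, ∀ i,
      (uhat1 x i - un x i) / τ + ξ * convect un un x i - ν * lap (fun y => uhat1 y i) x
        = -ξ * (φn x * pd i μn x + γn * pd i pn x))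
    (hcorrection : ∀ x ∈ Set.Icc a b, ∀ i,
      (un1 x i - uhat1 x i) / τ - ν * lap (fun y => un1 y i - uhat1 y i) x + pd i pn1 x
        = γn * pd i pn x)
    (hdiv : ∀ x ∈ Set.Icc a b, vdiv un1 x = 0)
    (hφbc : neumannBC a b φn1) (hμbc : neumannBC a b μn1)
    (huhatbc : ∀ x ∈ frontier (Set.Icc a b), uhat1 x = 0)
    (hubc : ∀ x ∈ frontier (Set.Icc a b), un1 x = 0)
    (hauxiliary : (Rn1 - Rn) / τ =
      (lam * (∫ x in Set.Icc a b, deriv F (φn x) * ((φn1 x - φn x) / τ))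
        + (∫ x in Set.Icc a b, μn1 x * vdiv (fun y i => un y i * φn y) x)
        + (∫ x in Set.Icc a b, ∑ i, uhat1 x i * (φn x * pd i μn x))
        + trib (Set.Icc a b) un un uhat1
        + γn * (∫ x in Set.Icc a b, ∑ i, pd i pn x * uhat1 x i))
      / (2 * lam * √((∫ x in Set.Icc a b, F (φn x)) + δ₀))) :
    ((1/2) * (∫ x in Set.Icc a b, ∑ i, (un1 x i)^2)
      + (lam/2) * (∫ x in Set.Icc a b, ∑ i, (pd i φn1 x)^2)
      + (lam * β / 2) * (∫ x in Set.Icc a b, (φn1 x)^2) + lam * Rn1^2)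
    - ((1/2) * (∫ x in Set.Icc a b, ∑ i, (un x i)^2)
      + (lam/2) * (∫ x in Set.Icc a b, ∑ i, (pd i φn x)^2)
      + (lam * β / 2) * (∫ x in Set.Icc a b, (φn x)^2) + lam * Rn^2)
    ≤ -(M * τ) * (∫ x in Set.Icc a b, ∑ i, (pd i μn1 x)^2)
      - (ν * τ / 2) * ((∫ x in Set.Icc a b, ∑ i, ∑ j, (pd j (fun y => uhat1 y i) x)^2)
        + (∫ x in Set.Icc a b, ∑ i, ∑ j, (pd j (fun y => un1 y i) x)^2)) := by
  have hvelocity := coupledVelocityStep_energy_le hτ hν hφn.continuous hμn hpn hpn1 hun huhat1 hun1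
    huhatbc hubc hprediction hcorrection hdiv
  have hphaseField := cahnHilliardStep_energy_le hτ.ne' hlam.le hβ hφn hφn1 hμn1
    (hF.continuous_deriv_one.comp hφn.continuous) hφbc hμbc hphase hpotential
  have hauxiliaryVariable :=
    auxiliaryVariable_energy_le hτ.ne' hlam (Real.sqrt_pos.2 hpos).ne' hξ hauxiliary
  simp only [Function.comp_apply] at hphaseField
  linarith

/-- Unconditional energy dissipation of the first-order structure-preserving IVS scheme
(Theorem 3.2 of the paper). -/
theorem stmt1 (d : ℕ) (hd : 1 ≤ d) (a b : Fin d → ℝ) (hab : ∀ i, a i < b i)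
    (Ω : Set (Fin d → ℝ)) (hΩ : Ω = Set.Icc a b)
    (τ M lam ν ε δ₀ β : ℝ)
    (hτ : 0 < τ) (hM : 0 < M) (hlam : 0 < lam) (hν : 0 < ν) (hε : 0 < ε)
    (hδ₀ : 0 < δ₀) (hβ : 0 ≤ β)
    (γn Rn Rn1 ξ : ℝ)
    (φn φn1 μn μn1 pn pn1 : (Fin d → ℝ) → ℝ)
    (un uhat1 un1 : (Fin d → ℝ) → Fin d → ℝ)
    (hφn : ContDiff ℝ 2 φn) (hφn1 : ContDiff ℝ 2 φn1)
    (hμn : ContDiff ℝ 2 μn) (hμn1 : ContDiff ℝ 2 μn1)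
    (hpn : ContDiff ℝ 2 pn) (hpn1 : ContDiff ℝ 2 pn1)
    (hun : ContDiff ℝ 2 un) (huhat1 : ContDiff ℝ 2 uhat1) (hun1 : ContDiff ℝ 2 un1)
    (hE1pos : 0 < E1 Ω ε β φn + δ₀)
    (hξ : ξ = Rn1 / Real.sqrt (E1 Ω ε β φn + δ₀))
    -- (i) discrete Cahn–Hilliard equation
    (heq1 : ∀ x ∈ Ω,
      (φn1 x - φn x) / τ + ξ * vdiv (fun y i => un y i * φn y) x = M * lap μn1 x)
    -- (ii) chemical potential
    (heq2 : ∀ x ∈ Ω,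
      μn1 x = -lam * lap φn1 x + lam * β * φn1 x + lam * ξ * Fprime ε β (φn x))
    -- (iii) intermediate velocity
    (heq3 : ∀ x ∈ Ω, ∀ i : Fin d,
      (uhat1 x i - un x i) / τ + ξ * convect un un x i - ν * lap (fun y => uhat1 y i) x
        = -ξ * (φn x * pd i μn x + γn * pd i pn x))
    -- (iv) correction step
    (heq4 : ∀ x ∈ Ω, ∀ i : Fin d,
      (un1 x i - uhat1 x i) / τ - ν * lap (fun y => un1 y i - uhat1 y i) x + pd i pn1 x
        = γn * pd i pn x)
    -- (v) incompressibility
    (heq5 : ∀ x ∈ Ω, vdiv un1 x = 0)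
    -- boundary conditions
    (hφbc : neumannBC a b φn1) (hμbc : neumannBC a b μn1)
    (huhatbc : ∀ x ∈ frontier Ω, uhat1 x = 0) (hubc : ∀ x ∈ frontier Ω, un1 x = 0)
    -- scalar auxiliary-variable relation
    (heqR : (Rn1 - Rn) / τ =
      (lam * (∫ x in Ω, Fprime ε β (φn x) * ((φn1 x - φn x) / τ))
        + (∫ x in Ω, μn1 x * vdiv (fun y i => un y i * φn y) x)
        + (∫ x in Ω, ∑ i, uhat1 x i * (φn x * pd i μn x))
        + trib Ω un un uhat1
        + γn * (∫ x in Ω, ∑ i, pd i pn x * uhat1 x i))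
      / (2 * lam * Real.sqrt (E1 Ω ε β φn + δ₀))) :
    -- discrete modified energy dissipation law
    ((1/2) * (∫ x in Ω, ∑ i, (un1 x i)^2)
      + (lam/2) * (∫ x in Ω, ∑ i, (pd i φn1 x)^2)
      + (lam * β / 2) * (∫ x in Ω, (φn1 x)^2) + lam * Rn1^2)
    - ((1/2) * (∫ x in Ω, ∑ i, (un x i)^2)
      + (lam/2) * (∫ x in Ω, ∑ i, (pd i φn x)^2)
      + (lam * β / 2) * (∫ x in Ω, (φn x)^2) + lam * Rn^2)
    ≤ -(M * τ) * (∫ x in Ω, ∑ i, (pd i μn1 x)^2)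
      - (ν * τ / 2) * ((∫ x in Ω, ∑ i, ∑ j, (pd j (fun y => uhat1 y i) x)^2)
        + (∫ x in Ω, ∑ i, ∑ j, (pd j (fun y => un1 y i) x)^2)) := by
  subst hΩ
  simp only [← deriv_Ffun] at heq2 heqR
  exact stmt1_general hτ hlam hν.le hβ (contDiff_Ffun ε β) (hφn.of_le one_le_two) hφn1
    (hμn.of_le one_le_two) hμn1 (hpn.of_le one_le_two) (hpn1.of_le one_le_two)
    (hun.of_le one_le_two) huhat1 hun1 hE1pos hξ heq1 heq2 heq3 heq4 heq5 hφbc hμbc huhatbc hubc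
    heqR
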